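/- For every τ ∈ ℍ with E2(τ) ≠ 0, the function p is complex differentiable at τ and its derivative equals p'(τ) = E4(τ)/E2(τ)². -/

import Mathlib

/-!
The claim is equivalent to Ramanujan's identity `(2πi)⁻¹ E₂' = (E₂² - E₄) / 12`: differentiating
`p = τ - 6i / (π E₂)` gives `p' = 1 + 6i E₂' / (π E₂²) = 1 - (E₂² - E₄) / E₂²`.

For Ramanujan's identity, put `F = E₂² - 12 D E₂` with `D = (2πi)⁻¹ d/dτ`. Differentiating the
quasi-modular transformation law `E₂|γ = E₂ - (6i/π) c / (cτ + d)` shows that the anomalous terms of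
`E₂²` and `12 D E₂` cancel, so `F` has weight `4` for `SL(2, ℤ)` (`ramanujanForm_slash`). In terms of
`q`, the operator `D` is `q d/dq`, hence `D E₂ → 0` and `F → 1` at the cusp
(`tendsto_ramanujanForm_sub`). Thus `F - E₄` is a level one cusp form of weight `4`, and every such
form vanishes.
-/


/-- `q = exp(2πiτ)`. -/
noncomputable def qexp (τ : ℂ) : ℂ := Complex.exp (2 * Real.pi * Complex.I * τ)

/-- Divisor power sum `σ_k(n) = ∑_{d | n} d^k`, as a complex number. -/
noncomputable def sigmaC (k n : ℕ) : ℂ := ∑ d ∈ Nat.divisors n, (d : ℂ) ^ k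

/-- Eisenstein series `E₂`. -/
noncomputable def E2 (τ : ℂ) : ℂ := 1 - 24 * ∑' n : ℕ, sigmaC 1 (n + 1) * qexp τ ^ (n + 1)

/-- Eisenstein series `E₄`. -/
noncomputable def E4 (τ : ℂ) : ℂ := 1 + 240 * ∑' n : ℕ, sigmaC 3 (n + 1) * qexp τ ^ (n + 1)

/-- Eisenstein series `E₆`. -/
noncomputable def E6 (τ : ℂ) : ℂ := 1 - 504 * ∑' n : ℕ, sigmaC 5 (n + 1) * qexp τ ^ (n + 1)

/-- The discriminant form `Δ = (E₄³ - E₆²)/1728`. -/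
noncomputable def Δfun (τ : ℂ) : ℂ := (E4 τ ^ 3 - E6 τ ^ 2) / 1728

/-- The ratio of quasi-periods `p(τ) = τ - 6i/(π E₂(τ))`. -/
noncomputable def pfun (τ : ℂ) : ℂ := τ - 6 * Complex.I / (Real.pi * E2 τ)

open UpperHalfPlane hiding I
open Complex Filter Topology ModularForm Derivative Function
open scoped Manifold MatrixGroups CongruenceSubgroup

/-- The quasi-modularity of `E₂`, with the factor `1 / (2 ζ(2)) = 3 / π²` evaluated. -/
lemma E2_slash_two (γ : SL(2, ℤ)) (z : ℍ) :
    (EisensteinSeries.E2 ∣[(2 : ℤ)] γ) z =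
      EisensteinSeries.E2 z - 6 * I / Real.pi * ((γ 1 0 : ℂ) / denom γ z) := by
  have hpi : (Real.pi : ℂ) ≠ 0 := by exact_mod_cast Real.pi_ne_zero
  rw [EisensteinSeries.E2_slash_action]
  simp only [Pi.sub_apply, Pi.smul_apply, smul_eq_mul, EisensteinSeries.D2, riemannZeta_two]
  field_simp

/-- The derivative of the right-hand side of `E2_slash_two`, using `d/dz (cz + d)⁻¹ = -c (cz + d)⁻²`. -/
lemma hasDerivAt_slash_E2 (γ : SL(2, ℤ)) (z : ℍ) :
    HasDerivAt ((EisensteinSeries.E2 ∣[(2 : ℤ)] γ) ∘ ofComplex)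
      (deriv (EisensteinSeries.E2 ∘ ofComplex) z +
        6 * I / Real.pi * ((γ 1 0 : ℂ) / denom γ z) ^ 2) z := by
  have h1 : HasDerivAt (EisensteinSeries.E2 ∘ ofComplex)
      (deriv (EisensteinSeries.E2 ∘ ofComplex) z) z :=
    (UpperHalfPlane.mdifferentiableAt_iff.mp (E2_mdifferentiable z)).hasDerivAt
  have h2 := hasDerivAt_denom_zpow (γ : GL (Fin 2) ℝ) (-1) z
  have h3 := h1.sub (h2.const_mul (6 * I / Real.pi * (γ 1 0 : ℂ)))
  have hz := denom_ne_zero (γ : GL (Fin 2) ℝ) z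
  refine (h3.congr_of_eventuallyEq ?_).congr_deriv ?_
  · filter_upwards [isOpen_upperHalfPlaneSet.mem_nhds z.im_pos] with w hw
    have := E2_slash_two γ ⟨w, hw⟩
    simp only [comp_apply, ofComplex_apply_of_im_pos hw, this, Pi.sub_apply]
    simp [div_eq_mul_inv, mul_assoc]
  · have : (((γ : GL (Fin 2) ℝ) 1 0 : ℝ) : ℂ) = (γ 1 0 : ℂ) := by simp
    rw [this, show (-1 - 1 : ℤ) = -2 by norm_num, zpow_neg]
    rw [Int.cast_neg, Int.cast_one, zpow_ofNat]
    field_simp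
    ring

/-- The function `E₂² - 12 D E₂` on the upper half-plane, where `D = (2πi)⁻¹ d/dz`. -/
noncomputable def ramanujanForm (z : ℍ) : ℂ :=
  EisensteinSeries.E2 z ^ 2 - 12 * D EisensteinSeries.E2 z

/-- `E₂² - 12 D E₂` has weight `4`: writing `u = c / (cz + d)`, both `E₂²` and `12 D E₂` change by
`-(12 i / π) u E₂ - (36 / π²) u²` under the slash action. -/
lemma ramanujanForm_slash (γ : SL(2, ℤ)) : ramanujanForm ∣[(4 : ℤ)] γ = ramanujanForm := by
  ext z
  have hpi : (Real.pi : ℂ) ≠ 0 := by exact_mod_cast Real.pi_ne_zero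
  have hz := denom_ne_zero (γ : GL (Fin 2) ℝ) z
  have h1 := E2_slash_two γ z
  have h2 := congrFun (normalizedDerivOfComplex_SL_slash (k := 2) E2_mdifferentiable (γ := γ)) z
  simp only [Pi.sub_apply] at h2
  rw [h1, normalizedDerivOfComplex, (hasDerivAt_slash_E2 γ z).deriv] at h2
  rw [ModularForm.SL_slash_apply] at h1 h2 ⊢
  simp only [ramanujanForm]
  have h3 : D EisensteinSeries.E2 z =
    (2 * Real.pi * I)⁻¹ * deriv (EisensteinSeries.E2 ∘ ofComplex) z := rfl
  set u := (γ 1 0 : ℂ) / denom γ z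
  have e4 : (denom γ z) ^ (-4 : ℤ) = (denom γ z) ^ (-2 : ℤ) * (denom γ z) ^ (-2 : ℤ) := by
    rw [← zpow_add₀ hz]; norm_num
  -- The slash law for `D` at weight `2`, solved for `(D E₂)|₄ γ`.
  have h4 : D EisensteinSeries.E2 (γ • z) * (denom γ z) ^ (-4 : ℤ) = D EisensteinSeries.E2 z
      - I / Real.pi * u * EisensteinSeries.E2 z - 3 / Real.pi ^ 2 * u ^ 2 := by
    rw [h3]
    have h2' := eq_add_of_sub_eq h2.symm
    norm_num at h2'
    norm_num
    rw [h2']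
    field_simp
    ring_nf
    simp only [I_sq]
    ring
  rw [sub_mul, e4, show ∀ a b : ℂ, a ^ 2 * (b * b) = (a * b) ^ 2 by intros; ring, h1,
    mul_assoc, ← e4, h4]
  field_simp
  ring_nf
  simp only [I_sq]
  ring

lemma periodic_E2 : Periodic (EisensteinSeries.E2 ∘ ofComplex) (1 : ℝ) := by
  intro w
  by_cases hw : 0 < im w
  · have hw' : 0 < im (w + (1 : ℝ)) := by simpa using hw
    simp only [comp_apply, ofComplex_apply_of_im_pos hw', ofComplex_apply_of_im_pos hw,
      EisensteinSeries.E2_eq_tsum_cexp]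
    simp [mul_add, exp_add]
  -- Outside the upper half-plane `ofComplex` takes a constant junk value.
  · have hw' : ¬ 0 < im (w + (1 : ℝ)) := by simpa using hw
    simp only [comp_apply, ofComplex_apply_of_im_nonpos (not_lt.mp hw'),
      ofComplex_apply_of_im_nonpos (not_lt.mp hw)]

lemma tendsto_qExpansion_coeff_zero {f : ℍ → ℂ} (hper : Periodic (f ∘ ofComplex) (1 : ℝ))
    (hol : MDiff f) (hbdd : IsBoundedAtImInfty f) :
    Tendsto f atImInfty (𝓝 ((qExpansion 1 f).coeff 0)) := by
  have hc := (analyticAt_cuspFunction_zero one_pos hper hol hbdd).continuousAt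
  have := hc.tendsto.comp (qParam_tendsto_atImInfty one_pos)
  simp only [qExpansion_coeff, Nat.factorial_zero, Nat.cast_one, inv_one, one_mul,
    iteratedDeriv_zero]
  refine this.congr fun z ↦ ?_
  exact eq_cuspFunction z one_ne_zero hper

/-- Since `f = g(q)` with `g` holomorphic at `0`, one has `D f = q g'(q)`, which tends to `0` with
`q`. -/
lemma tendsto_normalizedDeriv {f : ℍ → ℂ} (hper : Periodic (f ∘ ofComplex) (1 : ℝ))
    (hol : MDiff f) (hbdd : IsBoundedAtImInfty f) :
    Tendsto (D f) atImInfty (𝓝 0) := by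
  have hc := (analyticAt_cuspFunction_zero one_pos hper hol hbdd).deriv.continuousAt
  have hq := qParam_tendsto_atImInfty one_pos
  have := hq.mul (hc.tendsto.comp hq)
  rw [zero_mul] at this
  refine this.congr fun z ↦ ?_
  have hd : DifferentiableAt ℂ (cuspFunction 1 f) (Periodic.qParam 1 z) :=
    differentiableAt_cuspFunction one_pos hper hol hbdd
      (Periodic.norm_qParam_lt_one one_pos z.im_pos)
  have hqd : HasDerivAt (Periodic.qParam 1) (Periodic.qParam 1 z * (2 * Real.pi * I)) z := by
    have := ((hasDerivAt_id (z : ℂ)).const_mul (2 * Real.pi * I)).cexp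
    have hq' : Periodic.qParam 1 = fun w : ℂ ↦ cexp (2 * Real.pi * I * w) := by
      ext w
      simp [Periodic.qParam]
    rw [hq']
    simpa using this
  have hcomp := hd.hasDerivAt.comp (z : ℂ) hqd
  have hderiv : deriv (f ∘ ofComplex) z = _ := (hcomp.congr_of_eventuallyEq (by
    filter_upwards [isOpen_upperHalfPlaneSet.mem_nhds z.im_pos] with w hw
    have := eq_cuspFunction (⟨w, hw⟩ : ℍ) one_ne_zero hper
    simp only [comp_apply, ofComplex_apply_of_im_pos hw]
    exact this.symm)).deriv
  have h2pi : (2 * Real.pi * I : ℂ) ≠ 0 := two_pi_I_ne_zero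
  rw [normalizedDerivOfComplex, hderiv, comp_apply]
  field_simp

lemma tendsto_ramanujanForm_sub :
    Tendsto (fun z ↦ ramanujanForm z - E₄ z) atImInfty (𝓝 0) := by
  have hE2 := tendsto_qExpansion_coeff_zero periodic_E2 E2_mdifferentiable
    EisensteinSeries.isBoundedAtImInfty_E2
  have hc : (qExpansion 1 EisensteinSeries.E2).coeff 0 = 1 := by
    have := (hasFPowerSeriesOnBall_cuspFunction one_pos
      (analyticAt_cuspFunction_zero one_pos periodic_E2 E2_mdifferentiable
        EisensteinSeries.isBoundedAtImInfty_E2)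
      (c := fun m ↦ (if m = 0 then 1 else -24 * ArithmeticFunction.sigma 1 m : ℂ)) (fun τ ↦ by
      simpa only [Periodic.qParam, ofReal_one, div_one] using
        EisensteinSeries.hasSum_qExpansion_E2 (z := τ))).coeff_zero ![]
    simpa [qExpansion_coeff] using this.symm
  rw [hc] at hE2
  have hE4 := tendsto_qExpansion_coeff_zero
    (SlashInvariantFormClass.periodic_comp_ofComplex E₄ one_mem_strictPeriods_SL)
    (ModularFormClass.holo E₄) (ModularFormClass.bdd_at_infty E₄)
  rw [EisensteinSeries.E_qExpansion_coeff_zero _ ⟨2, rfl⟩] at hE4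
  have hD := tendsto_normalizedDeriv periodic_E2 E2_mdifferentiable
    EisensteinSeries.isBoundedAtImInfty_E2
  simpa [ramanujanForm] using! ((hE2.pow 2).sub (hD.const_mul 12)).sub hE4

/-- The difference `E₂² - 12 D E₂ - E₄` as a cusp form of weight `4` and level one. -/
noncomputable def ramanujanDiff : CuspForm 𝒮ℒ 4 where
  toFun := ramanujanForm - E₄
  slash_action_eq' := by
    rintro _ ⟨γ, rfl⟩
    have h4 := SlashInvariantFormClass.slash_action_eq E₄ _ ⟨γ, rfl⟩
    rw [sub_eq_add_neg, SlashAction.add_slash, SlashAction.neg_slash]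
    exact congrArg₂ (· + -·) (ramanujanForm_slash γ) h4
  holo' := by
    refine MDifferentiable.sub ?_ (ModularFormClass.holo E₄)
    have := (E2_mdifferentiable.mul E2_mdifferentiable).sub
      ((normalizedDerivOfComplex_mdifferentiable E2_mdifferentiable).const_smul (12 : ℂ))
    convert! this using 1
    ext z
    simp [ramanujanForm, sq]
  zero_at_cusps' {c} hc := by
    rw [Subgroup.IsArithmetic.isCusp_iff_isCusp_SL2Z] at hc
    rw [OnePoint.isZeroAt_iff_forall_SL2Z hc]
    intro γ _
    have h4 : (E₄ : ℍ → ℂ) ∣[(4 : ℤ)] γ = E₄ :=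
      SlashInvariantFormClass.slash_action_eq E₄ _ ⟨γ, rfl⟩
    rw [sub_eq_add_neg, SlashAction.add_slash, SlashAction.neg_slash, h4, ramanujanForm_slash,
      ← sub_eq_add_neg]
    exact tendsto_ramanujanForm_sub

lemma ramanujanForm_eq_E4 (z : ℍ) : ramanujanForm z = E₄ z := by
  have h : ramanujanDiff = 0 :=
    rank_zero_iff_forall_zero.mp (CuspForm.rank_eq_zero_of_weight_lt_twelve (by norm_num)) _
  have := DFunLike.congr_fun h z
  exact sub_eq_zero.mp this

lemma sigmaC_eq (k n : ℕ) : sigmaC k n = (ArithmeticFunction.sigma k n : ℂ) := by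
  simp [sigmaC, ArithmeticFunction.sigma_apply]

lemma E2_eq (z : ℍ) : E2 z = EisensteinSeries.E2 z := by
  rw [EisensteinSeries.E2_eq_tsum_cexp, tsum_pnat_eq_tsum_succ
    (f := fun n ↦ (ArithmeticFunction.sigma 1 n : ℂ) * cexp (2 * Real.pi * I * z) ^ n)]
  simp only [E2, sigmaC_eq, qexp]

lemma E4_eq (z : ℍ) : E4 z = E₄ z := by
  have := EisensteinSeries.q_expansion_bernoulli (by norm_num : 3 ≤ 4) ⟨2, rfl⟩ z
  simp_rw [zpow_natCast] at this
  rw [this, tsum_pnat_eq_tsum_succ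
    (f := fun n ↦ (ArithmeticFunction.sigma (4 - 1) n : ℂ) * cexp (2 * Real.pi * I * z) ^ n)]
  simp only [E4, sigmaC_eq, qexp]
  norm_num [show bernoulli 4 = -1 / 30 by decide +kernel]

/-- Ramanujan's identity for the derivative of `E₂`. -/
lemma hasDerivAt_E2 (τ : ℂ) (hτ : 0 < τ.im) :
    HasDerivAt E2 (2 * Real.pi * I / 12 * (E2 τ ^ 2 - E4 τ)) τ := by
  have h1 := (UpperHalfPlane.mdifferentiableAt_iff.mp (E2_mdifferentiable ⟨τ, hτ⟩)).hasDerivAt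
  refine (h1.congr_of_eventuallyEq ?_).congr_deriv ?_
  · filter_upwards [isOpen_upperHalfPlaneSet.mem_nhds hτ] with w hw
    simp only [comp_apply, ofComplex_apply_of_im_pos hw]
    exact E2_eq ⟨w, hw⟩
  · have h := ramanujanForm_eq_E4 ⟨τ, hτ⟩
    rw [ramanujanForm, ← E2_eq, ← E4_eq, normalizedDerivOfComplex] at h
    have h2pi : (2 * Real.pi * I : ℂ) ≠ 0 := two_pi_I_ne_zero
    simp only at h ⊢
    rw [← h]
    field_simp
    ring

/-- Wherever `E₂(τ) ≠ 0`, the function `p` is complex differentiable with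
`p'(τ) = E₄(τ)/E₂(τ)²`. -/
theorem p_derivative (τ : ℂ) (hτ : 0 < τ.im) (hE : E2 τ ≠ 0) :
    HasDerivAt pfun (E4 τ / E2 τ ^ 2) τ := by
  have hpi : (Real.pi : ℂ) ≠ 0 := by exact_mod_cast Real.pi_ne_zero
  have h := (hasDerivAt_id τ).sub ((hasDerivAt_const τ (6 * I)).div
    ((hasDerivAt_E2 τ hτ).const_mul (Real.pi : ℂ)) (mul_ne_zero hpi hE))
  refine h.congr_deriv ?_
  field_simp
  ring_nf
  simp only [I_sq]
  ring
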